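/- Let n ≥ 1 and let ψ̃ : X(ℝⁿ) × X_c(ℝⁿ) → ℝ be an ℝ-bilinear map satisfying the 1-cocycle identity ψ̃([v,w],u) = ψ̃(v,[w,u]) − ψ̃(w,[v,u]) for all v, w ∈ X(ℝⁿ) and all u ∈ X_c(ℝⁿ). Suppose that ψ̃(w,u) = 0 for every u ∈ X_c(ℝⁿ) and every vector field w all of whose component functions are polynomials of degree at most n+2. Then ψ̃(w,u) = 0 for every u ∈ X_c(ℝⁿ) and every vector field w all of whose component functions are polynomials (of arbitrary degree). -/

import Mathlib

/-!
Fix `ψ` as in the statement. The smooth vector fields `w` with `ψ w u = 0` for every compactly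
supported `u` form a Lie subalgebra: this is immediate from the cocycle identity, because the
bracket of a smooth field with a compactly supported one is again compactly supported. It is thus
enough that polynomial fields of degree at most `3 ≤ n + 2` generate all polynomial fields.

This is shown by induction on the degree of a monomial field `x^α ∂ᵢ` (`polyVF_monomial_mem`),
using
`[x^β ∂ᵢ, x^γ ∂ᵢ] = (γᵢ - βᵢ) x^(β + γ - eᵢ) ∂ᵢ`.
If `4 ≤ |α|`, then `α + eᵢ = β + γ` for some `β`, `γ` of degree smaller than `|α|` with
`βᵢ ≠ γᵢ` (`exists_split`).
-/

noncomputable section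

/-- A compactly supported smooth vector field on `ℝⁿ`. -/
def IsCompactlySupportedVF {n : ℕ}
    (u : EuclideanSpace ℝ (Fin n) → EuclideanSpace ℝ (Fin n)) : Prop :=
  ContDiff ℝ (⊤ : ℕ∞) u ∧ HasCompactSupport u

/-- A vector field on `ℝⁿ` all of whose component functions are polynomials of total degree
at most `k`. -/
def IsPolyVFDegLE {n : ℕ} (w : EuclideanSpace ℝ (Fin n) → EuclideanSpace ℝ (Fin n))
    (k : ℕ) : Prop :=
  ∃ p : Fin n → MvPolynomial (Fin n) ℝ, (∀ i, (p i).totalDegree ≤ k) ∧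
    ∀ x i, w x i = MvPolynomial.eval (fun j ↦ x j) (p i)

/-- A vector field on `ℝⁿ` all of whose component functions are polynomials
(of arbitrary degree). -/
def IsPolyVF {n : ℕ} (w : EuclideanSpace ℝ (Fin n) → EuclideanSpace ℝ (Fin n)) : Prop :=
  ∃ p : Fin n → MvPolynomial (Fin n) ℝ,
    ∀ x i, w x i = MvPolynomial.eval (fun j ↦ x j) (p i)

open MvPolynomial

/-- The polynomial vector field `p ∂ᵢ`. -/
def polyVF {n : ℕ} (i : Fin n) (p : MvPolynomial (Fin n) ℝ) :
    EuclideanSpace ℝ (Fin n) → EuclideanSpace ℝ (Fin n) :=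
  fun x ↦ EuclideanSpace.single i (eval (fun j ↦ x j) p)

lemma contDiff_eval {n : ℕ} (p : MvPolynomial (Fin n) ℝ) :
    ContDiff ℝ (⊤ : ℕ∞) (fun x : EuclideanSpace ℝ (Fin n) ↦ eval (fun j ↦ x j) p) := by
  induction p using MvPolynomial.induction_on with
  | C a => simpa using contDiff_const
  | add p q hp hq => simpa using hp.add hq
  | mul_X p k hp =>
    have : ContDiff ℝ (⊤ : ℕ∞) (fun x : EuclideanSpace ℝ (Fin n) ↦ x k) := by fun_prop
    simpa using hp.mul this

lemma fderiv_eval_single {n : ℕ} (p : MvPolynomial (Fin n) ℝ) (x : EuclideanSpace ℝ (Fin n))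
    (i : Fin n) (c : ℝ) :
    fderiv ℝ (fun x : EuclideanSpace ℝ (Fin n) ↦ eval (fun j ↦ x j) p) x
      (EuclideanSpace.single i c) = c * eval (fun j ↦ x j) (pderiv i p) := by
  have hd (q : MvPolynomial (Fin n) ℝ) : DifferentiableAt ℝ
      (fun x : EuclideanSpace ℝ (Fin n) ↦ eval (fun j ↦ x j) q) x :=
    ((contDiff_eval q).differentiable (by simp)).differentiableAt
  induction p using MvPolynomial.induction_on with
  | C a => simp
  | add p q hp hq =>
    simp only [map_add]
    rw [fderiv_fun_add (hd p) (hd q), add_apply, hp, hq]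
    ring
  | mul_X p k hp =>
    have hX : HasFDerivAt (fun x : EuclideanSpace ℝ (Fin n) ↦ x k)
        (EuclideanSpace.proj k : EuclideanSpace ℝ (Fin n) →L[ℝ] ℝ) x :=
      (EuclideanSpace.proj k : EuclideanSpace ℝ (Fin n) →L[ℝ] ℝ).hasFDerivAt
    simp only [map_mul, eval_X]
    rw [fderiv_fun_mul (hd p) hX.differentiableAt, hX.fderiv]
    simp only [add_apply, smul_apply, hp, PiLp.proj_apply, smul_eq_mul,
      Derivation.leibniz, map_add, pderiv_X, map_mul, eval_X]
    by_cases h : k = i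
    · subst h; simp; ring
    · simp [h]; ring

lemma contDiff_polyVF {n : ℕ} (i : Fin n) (p : MvPolynomial (Fin n) ℝ) :
    ContDiff ℝ (⊤ : ℕ∞) (polyVF i p) := by
  rw [contDiff_euclidean]
  intro k
  by_cases h : k = i
  · simpa [polyVF, h] using contDiff_eval p
  · simpa [polyVF, h] using contDiff_const

lemma fderiv_polyVF {n : ℕ} (i : Fin n) (p : MvPolynomial (Fin n) ℝ)
    (x : EuclideanSpace ℝ (Fin n)) (c : ℝ) :
    fderiv ℝ (polyVF i p) x (EuclideanSpace.single i c) =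
      EuclideanSpace.single i (c * eval (fun j ↦ x j) (pderiv i p)) := by
  have hp : DifferentiableAt ℝ (polyVF i p) x :=
    ((contDiff_polyVF i p).differentiable (by simp)).differentiableAt
  ext k
  have h1 : HasFDerivAt (fun y ↦ polyVF i p y k) _ x :=
    (EuclideanSpace.proj k : EuclideanSpace ℝ (Fin n) →L[ℝ] ℝ).hasFDerivAt.comp x hp.hasFDerivAt
  have h2 := congrArg (fun L ↦ L (EuclideanSpace.single i c)) h1.fderiv
  simp only [ContinuousLinearMap.comp_apply, PiLp.proj_apply] at h2
  rw [← h2]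
  by_cases h : k = i
  · subst h
    simpa [polyVF] using fderiv_eval_single p x k c
  · simp [polyVF, h]

lemma lieBracket_polyVF {n : ℕ} (i : Fin n) (p q : MvPolynomial (Fin n) ℝ) :
    VectorField.lieBracket ℝ (polyVF i p) (polyVF i q) =
      polyVF i (p * pderiv i q - q * pderiv i p) := by
  funext x
  rw [VectorField.lieBracket_eq]
  change fderiv ℝ (polyVF i q) x (EuclideanSpace.single i _) -
    fderiv ℝ (polyVF i p) x (EuclideanSpace.single i _) = _
  rw [fderiv_polyVF, fderiv_polyVF]
  ext k
  simp only [polyVF, PiLp.sub_apply, PiLp.single_apply, map_sub, map_mul]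
  split_ifs <;> simp

lemma polyVF_add {n : ℕ} (i : Fin n) (p q : MvPolynomial (Fin n) ℝ) :
    polyVF i (p + q) = polyVF i p + polyVF i q := by
  funext x
  ext k
  simp only [polyVF, Pi.add_apply, PiLp.add_apply, PiLp.single_apply, map_add]
  split_ifs <;> simp

lemma polyVF_smul {n : ℕ} (i : Fin n) (c : ℝ) (p : MvPolynomial (Fin n) ℝ) :
    polyVF i (c • p) = c • polyVF i p := by
  funext x
  ext k
  simp [polyVF, smul_eval]

lemma IsCompactlySupportedVF.lieBracket {n : ℕ}
    {w u : EuclideanSpace ℝ (Fin n) → EuclideanSpace ℝ (Fin n)}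
    (hw : ContDiff ℝ (⊤ : ℕ∞) w) (hu : IsCompactlySupportedVF u) :
    IsCompactlySupportedVF (VectorField.lieBracket ℝ w u) := by
  refine ⟨hw.lieBracket_vectorField hu.1 (by simp), HasCompactSupport.intro hu.2 fun x hx ↦ ?_⟩
  rw [VectorField.lieBracket_eq]
  simp [fderiv_of_notMem_tsupport ℝ hx, image_eq_zero_of_notMem_tsupport hx]

/-- `[x^β ∂ᵢ, x^γ ∂ᵢ] = (γᵢ - βᵢ) x^α ∂ᵢ`, where `α = β + γ - eᵢ`. -/
lemma lieBracket_monomial {n : ℕ} (i : Fin n) {α β γ : Fin n →₀ ℕ}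
    (h : α + Finsupp.single i 1 = β + γ) :
    VectorField.lieBracket ℝ (polyVF i (monomial β 1)) (polyVF i (monomial γ 1)) =
      ((γ i : ℝ) - β i) • polyVF i (monomial α 1) := by
  rw [lieBracket_polyVF, ← polyVF_smul]
  congr 1
  rw [pderiv_monomial, pderiv_monomial, monomial_mul, monomial_mul]
  have key (δ ε : Fin n →₀ ℕ) (hs : α + Finsupp.single i 1 = δ + ε) :
      monomial (δ + (ε - Finsupp.single i 1)) (1 * (1 * (ε i : ℝ))) =
        monomial α (ε i : ℝ) := by
    rcases Nat.eq_zero_or_pos (ε i) with h0 | h0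
    -- The exponent `ε - eᵢ` is truncated here, but the coefficient vanishes.
    · simp [h0]
    · rw [one_mul, one_mul, ← add_tsub_assoc_of_le (by simpa using Nat.succ_le_iff.2 h0), ← hs,
        add_tsub_cancel_right]
  rw [key β γ h, key γ β (h.trans (add_comm _ _)), ← map_sub, smul_monomial, smul_eq_mul, mul_one]

/-- Every exponent of degree at least `4` splits so that `lieBracket_monomial` expresses `x^α ∂ᵢ`
through a bracket of monomial fields of smaller degree. -/
lemma exists_split {n : ℕ} (i : Fin n) (α : Fin n →₀ ℕ) (hα : 4 ≤ α.degree) :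
    ∃ β γ : Fin n →₀ ℕ, α + Finsupp.single i 1 = β + γ ∧ γ i ≠ β i ∧
      β.degree < α.degree ∧ γ.degree < α.degree := by
  -- It suffices to choose `δ ≤ α` with `1 ≤ |δ| ≤ 2`: take `β = δ + eᵢ` and `γ = α - δ`, so that the
  -- condition `γᵢ ≠ βᵢ` reads `αᵢ ≠ 2δᵢ + 1`.
  suffices h : ∃ δ : Fin n →₀ ℕ, δ ≤ α ∧ α i ≠ 2 * δ i + 1 ∧ 1 ≤ δ.degree ∧ δ.degree ≤ 2 by
    obtain ⟨δ, hδ, hi, h1, h2⟩ := h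
    obtain ⟨γ, rfl⟩ := exists_add_of_le hδ
    refine ⟨δ + Finsupp.single i 1, γ, by abel, ?_, ?_, ?_⟩ <;>
      simp [Finsupp.degree_single] at * <;> omega
  by_cases h0 : α i = 0
  · obtain ⟨j, hj⟩ : ∃ j, α j ≠ 0 := by
      by_contra! hc
      have : α = 0 := Finsupp.ext hc
      simp [this] at hα
    refine ⟨Finsupp.single j 1, by simpa using Nat.one_le_iff_ne_zero.2 hj, by omega, ?_, ?_⟩ <;>
      simp
  by_cases h3 : α i = 3
  · refine ⟨Finsupp.single i 2, by simp [h3], by simp [h3], ?_, ?_⟩ <;> simp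
  · refine ⟨Finsupp.single i 1, by simpa using Nat.one_le_iff_ne_zero.2 h0, by simpa using h3,
      ?_, ?_⟩ <;> simp

/-- A class of smooth fields that is closed under brackets and cancellation of nonzero scalars, and
that contains the monomial fields of degree at most `3`, contains all monomial fields. -/
lemma polyVF_monomial_mem {n : ℕ}
    (Z : (EuclideanSpace ℝ (Fin n) → EuclideanSpace ℝ (Fin n)) → Prop)
    (hbase : ∀ i α, α.degree ≤ 3 → Z (polyVF i (monomial α 1)))
    (hsmul : ∀ (c : ℝ) i p, c ≠ 0 → Z (c • polyVF i p) → Z (polyVF i p))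
    (hbr : ∀ i p q, Z (polyVF i p) → Z (polyVF i q) →
      Z (VectorField.lieBracket ℝ (polyVF i p) (polyVF i q)))
    (i : Fin n) (α : Fin n →₀ ℕ) : Z (polyVF i (monomial α 1)) := by
  induction hd : α.degree using Nat.strong_induction_on generalizing α with
  | _ d ih =>
    subst hd
    by_cases h3 : α.degree ≤ 3
    · exact hbase i α h3
    obtain ⟨β, γ, hs, hne, hβ, hγ⟩ := exists_split i α (by omega)
    have h := hbr i _ _ (ih _ hβ β rfl) (ih _ hγ γ rfl)
    rw [lieBracket_monomial i hs] at h
    exact hsmul _ i _ (sub_ne_zero.2 (by exact_mod_cast hne)) h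

/-- If a bilinear `1`-cocycle `ψ̃ : 𝔛(ℝⁿ) × 𝔛_c(ℝⁿ) → ℝ` vanishes on polynomial vector
fields of degree at most `n+2`, then it vanishes on all polynomial vector fields. -/
theorem one_cocycle_vanishes_on_polynomials (n : ℕ) (hn : 1 ≤ n)
    (ψ : (EuclideanSpace ℝ (Fin n) → EuclideanSpace ℝ (Fin n)) →
      (EuclideanSpace ℝ (Fin n) → EuclideanSpace ℝ (Fin n)) → ℝ)
    (hadd₁ : ∀ v₁ v₂ u, ContDiff ℝ (⊤ : ℕ∞) v₁ → ContDiff ℝ (⊤ : ℕ∞) v₂ → IsCompactlySupportedVF u →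
      ψ (v₁ + v₂) u = ψ v₁ u + ψ v₂ u)
    (hsmul₁ : ∀ (c : ℝ) v u, ContDiff ℝ (⊤ : ℕ∞) v → IsCompactlySupportedVF u →
      ψ (c • v) u = c * ψ v u)
    (hadd₂ : ∀ v u₁ u₂, ContDiff ℝ (⊤ : ℕ∞) v → IsCompactlySupportedVF u₁ →
      IsCompactlySupportedVF u₂ → ψ v (u₁ + u₂) = ψ v u₁ + ψ v u₂)
    (hsmul₂ : ∀ (c : ℝ) v u, ContDiff ℝ (⊤ : ℕ∞) v → IsCompactlySupportedVF u →
      ψ v (c • u) = c * ψ v u)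
    (hcoc : ∀ v w u, ContDiff ℝ (⊤ : ℕ∞) v → ContDiff ℝ (⊤ : ℕ∞) w → IsCompactlySupportedVF u →
      ψ (VectorField.lieBracket ℝ v w) u =
        ψ v (VectorField.lieBracket ℝ w u) - ψ w (VectorField.lieBracket ℝ v u))
    (hvanish : ∀ w u, IsPolyVFDegLE w (n + 2) → IsCompactlySupportedVF u → ψ w u = 0) :
    ∀ w u, IsPolyVF w → IsCompactlySupportedVF u → ψ w u = 0 := by
  have hmono : ∀ i α, ∀ u, IsCompactlySupportedVF u → ψ (polyVF i (monomial α 1)) u = 0 := by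
    refine polyVF_monomial_mem (fun w ↦ ∀ u, IsCompactlySupportedVF u → ψ w u = 0) ?_ ?_ ?_
    · intro i α hα u hu
      refine hvanish _ u ⟨fun k ↦ if k = i then monomial α 1 else 0, fun k ↦ ?_, fun x k ↦ ?_⟩ hu
      · dsimp only
        split_ifs
        · rw [totalDegree_monomial _ one_ne_zero]
          change α.degree ≤ _
          omega
        · simp
      · by_cases h : k = i <;> simp [polyVF, h]
    · intro c i p hc h u hu
      have := h u hu
      rw [hsmul₁ c _ u (contDiff_polyVF i p) hu] at this
      exact (mul_eq_zero.1 this).resolve_left hc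
    · intro i p q hp hq u hu
      rw [hcoc _ _ u (contDiff_polyVF i p) (contDiff_polyVF i q) hu,
        hp _ (.lieBracket (contDiff_polyVF i q) hu),
        hq _ (.lieBracket (contDiff_polyVF i p) hu), sub_zero]
  have hpoly : ∀ i p u, IsCompactlySupportedVF u → ψ (polyVF i p) u = 0 := by
    intro i p u hu
    induction p using MvPolynomial.induction_on' with
    | monomial α a =>
      have : monomial α a = a • monomial α (1 : ℝ) := by simp [smul_monomial]
      rw [this, polyVF_smul, hsmul₁ _ _ u (contDiff_polyVF i _) hu, hmono i α u hu, mul_zero]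
    | add p q hp hq =>
      rw [polyVF_add, hadd₁ _ _ u (contDiff_polyVF i p) (contDiff_polyVF i q) hu, hp, hq, add_zero]
  rintro w u ⟨p, hp⟩ hu
  have hw : w = ∑ i, polyVF i (p i) := by
    funext x
    ext k
    simp [hp, polyVF, Finset.sum_apply]
  have hsum : ∀ s : Finset (Fin n), ContDiff ℝ (⊤ : ℕ∞) (∑ i ∈ s, polyVF i (p i)) ∧
      ψ (∑ i ∈ s, polyVF i (p i)) u = 0 := by
    intro s
    induction s using Finset.induction_on with
    | empty =>
      refine ⟨contDiff_const, ?_⟩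
      have := hsmul₁ 0 0 u contDiff_const hu
      simpa using this
    | insert i s hi ih =>
      rw [Finset.sum_insert hi]
      refine ⟨(contDiff_polyVF i (p i)).add ih.1, ?_⟩
      rw [hadd₁ _ _ u (contDiff_polyVF i (p i)) ih.1 hu, ih.2, hpoly i (p i) u hu, add_zero]
  rw [hw]
  exact (hsum _).2
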